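/- arXiv:1505.04909 — 3 statements merged into one kernel-verified Lean document; each statement's English description precedes it below -/
import Mathlib

section
/- Let M and K be positive integers, let G be a real M×K matrix, and let Q be a symmetric positive-definite real M×M matrix. Then tr(Gᵀ Q⁻¹ G) ≥ [tr(Gᵀ G)]² / tr(Gᵀ Q G), provided tr(Gᵀ Q G) > 0. -/
open Matrix

/-! For positive definite `Q`, the pairing `(X, Y) ↦ tr(Xᵀ Q Y)` is an inner product on matrices.
The inequality is Cauchy–Schwarz for the pair `G`, `Q⁻¹ G`: their pairing is `tr(Gᵀ G)`, and their
squared norms are `tr(Gᵀ Q G)` and `tr(Gᵀ Q⁻¹ G)`. -/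

section WeightedTraceForm

variable {m n R : Type*} [Fintype m] [Fintype n] [CommRing R]

/-- The bilinear form `(X, Y) ↦ tr(Xᵀ P Y)` on `m × n` matrices: the Frobenius pairing with
weight `P`. -/
def weightedTraceForm (P : Matrix m m R) : LinearMap.BilinForm R (Matrix m n R) :=
  LinearMap.mk₂ R (fun X Y ↦ (Xᵀ * P * Y).trace)
    (by simp [Matrix.add_mul]) (by simp) (by simp [Matrix.mul_add]) (by simp)

theorem weightedTraceForm_apply (P : Matrix m m R) (X Y : Matrix m n R) :
    weightedTraceForm P X Y = (Xᵀ * P * Y).trace :=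
  rfl

theorem weightedTraceForm_isSymm {P : Matrix m m R} (hP : P.IsSymm) :
    LinearMap.IsSymm (weightedTraceForm (n := n) P) where
  eq X Y := by
    simpa [weightedTraceForm_apply, Matrix.mul_assoc, hP.eq] using
      (trace_transpose (Xᵀ * P * Y)).symm

theorem weightedTraceForm_self_nonneg [PartialOrder R] [AddLeftMono R] [StarRing R] [TrivialStar R]
    {P : Matrix m m R} (hP : P.PosSemidef) (X : Matrix m n R) :
    0 ≤ weightedTraceForm P X X := by
  rw [weightedTraceForm_apply, ← conjTranspose_eq_transpose_of_trivial]
  exact (hP.conjTranspose_mul_mul_same X).trace_nonneg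

theorem sq_trace_transpose_mul_mul_le [LinearOrder R] [IsStrictOrderedRing R] [StarRing R]
    [TrivialStar R] {P : Matrix m m R} (hP : P.PosSemidef) (X Y : Matrix m n R) :
    (Xᵀ * P * Y).trace ^ 2 ≤ (Xᵀ * P * X).trace * (Yᵀ * P * Y).trace :=
  (weightedTraceForm P).apply_sq_le_of_symm (weightedTraceForm_self_nonneg hP)
    (weightedTraceForm_isSymm (isHermitian_iff_isSymm.mp hP.isHermitian)) X Y

end WeightedTraceForm

section OrderedField

variable {m n 𝕜 : Type*} [Fintype m] [Fintype n] [DecidableEq m]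
  [Field 𝕜] [LinearOrder 𝕜] [IsStrictOrderedRing 𝕜] [StarRing 𝕜] [TrivialStar 𝕜]

theorem sq_trace_transpose_mul_le {Q : Matrix m m 𝕜} (hQ : Q.PosDef) (X Y : Matrix m n 𝕜) :
    (Xᵀ * Y).trace ^ 2 ≤ (Xᵀ * Q * X).trace * (Yᵀ * Q⁻¹ * Y).trace := by
  have hdet : IsUnit Q.det := (isUnit_iff_isUnit_det Q).mp hQ.isUnit
  have hQ_inv_symm : (Q⁻¹).IsSymm := isHermitian_iff_isSymm.mp hQ.isHermitian.inv
  have hcross : Xᵀ * Q * (Q⁻¹ * Y) = Xᵀ * Y := by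
    rw [Matrix.mul_assoc, mul_nonsing_inv_cancel_left Q Y hdet]
  have hself : (Q⁻¹ * Y)ᵀ * Q * (Q⁻¹ * Y) = Yᵀ * Q⁻¹ * Y := by
    rw [Matrix.mul_assoc, mul_nonsing_inv_cancel_left Q Y hdet, transpose_mul, hQ_inv_symm.eq]
  simpa only [hcross, hself] using sq_trace_transpose_mul_mul_le hQ.posSemidef X (Q⁻¹ * Y)

theorem stmt_0_general (G : Matrix m n 𝕜) {Q : Matrix m m 𝕜} (hQ : Q.PosDef)
    (htr : 0 < (Gᵀ * Q * G).trace) :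
    (Gᵀ * G).trace ^ 2 / (Gᵀ * Q * G).trace ≤ (Gᵀ * Q⁻¹ * G).trace :=
  (div_le_iff₀' htr).mpr (sq_trace_transpose_mul_le hQ G G)

end OrderedField

/-- Trace Cauchy–Schwarz inequality (Lemma 1 of the paper):
for a real `M × K` matrix `G` and a symmetric positive-definite `M × M` matrix `Q`,
`tr(Gᵀ Q⁻¹ G) ≥ [tr(Gᵀ G)]² / tr(Gᵀ Q G)` provided `tr(Gᵀ Q G) > 0`. -/
theorem stmt_0 (M K : ℕ) (hM : 0 < M) (hK : 0 < K)
    (G : Matrix (Fin M) (Fin K) ℝ) (Q : Matrix (Fin M) (Fin M) ℝ)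
    (hQ : Q.PosDef)
    (htr : 0 < (Gᵀ * Q * G).trace) :
    ((Gᵀ * G).trace) ^ 2 / (Gᵀ * Q * G).trace ≤ (Gᵀ * Q⁻¹ * G).trace :=
  stmt_0_general G hQ htr
end

section
/- Let Φ be a symmetric positive-semidefinite real M×M matrix, let Q be a symmetric positive-definite real M×M matrix, and let D be a real diagonal M×M matrix such that tr(Φ D Q D) > 0. Then tr(Φ D Q⁻¹ D) ≥ [tr(Φ D²)]² / tr(Φ D Q D). -/
open Matrix

/-! The pairing `(X, Y) ↦ tr(Φ X Q Yᴴ)` is a semi-inner product. Its Cauchy–Schwarz inequality at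
`X` and `Y Q⁻¹` gives the bound, because `Q` cancels against `Q⁻¹` in the cross term. -/

section WeightedTrace

open scoped ComplexOrder

variable {𝕜 m n : Type*} [RCLike 𝕜] [Fintype m] [Fintype n]

open scoped MatrixOrder in
theorem trace_mul_nonneg_of_posSemidef {A B : Matrix m m 𝕜}
    (hA : A.PosSemidef) (hB : B.PosSemidef) : 0 ≤ (A * B).trace := by
  classical
  obtain ⟨C, rfl⟩ := CStarAlgebra.nonneg_iff_eq_star_mul_self.mp hA.nonneg
  rw [star_eq_conjTranspose, mul_assoc, trace_mul_comm]
  exact (hB.mul_mul_conjTranspose_same C).trace_nonneg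

/-- The semi-inner product `⟪X, Y⟫ = tr(Φ Y Q Xᴴ)` on rectangular matrices, weighted on the two
sides by positive semidefinite matrices; it brings Cauchy–Schwarz to weighted traces. The order of
`X` and `Y` makes it conjugate-linear in the first variable, as Mathlib requires. -/
abbrev weightedTraceCore {Φ : Matrix m m 𝕜} {Q : Matrix n n 𝕜}
    (hΦ : Φ.PosSemidef) (hQ : Q.PosSemidef) :
    PreInnerProductSpace.Core 𝕜 (Matrix m n 𝕜) where
  inner X Y := (Φ * Y * Q * Xᴴ).trace
  conj_inner_symm X Y := by
    have hadjoint : (Φ * X * Q * Yᴴ)ᴴ = Y * Q * Xᴴ * Φ := by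
      simp only [conjTranspose_mul, conjTranspose_conjTranspose, hΦ.isHermitian.eq,
        hQ.isHermitian.eq, Matrix.mul_assoc]
    rw [starRingEnd_apply, ← trace_conjTranspose, hadjoint, trace_mul_comm]
    simp only [Matrix.mul_assoc]
  re_inner_nonneg X := by
    have htrace := trace_mul_nonneg_of_posSemidef hΦ (hQ.mul_mul_conjTranspose_same X)
    simpa only [Matrix.mul_assoc] using (RCLike.nonneg_iff.mp htrace).1
  add_left X Y Z := by simp only [conjTranspose_add, Matrix.mul_add, trace_add]
  smul_left X Y c := by
    simp only [conjTranspose_smul, Matrix.mul_smul, trace_smul, smul_eq_mul, starRingEnd_apply]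

theorem norm_trace_mul_mul_mul_conjTranspose_sq_le {Φ : Matrix m m 𝕜} {Q : Matrix n n 𝕜}
    (hΦ : Φ.PosSemidef) (hQ : Q.PosSemidef) (X Y : Matrix m n 𝕜) :
    ‖(Φ * X * Q * Yᴴ).trace‖ ^ 2 ≤
      RCLike.re (Φ * X * Q * Xᴴ).trace * RCLike.re (Φ * Y * Q * Yᴴ).trace := by
  let := weightedTraceCore hΦ hQ
  have hCS := InnerProductSpace.Core.inner_mul_inner_self_le (𝕜 := 𝕜) Y X
  rwa [InnerProductSpace.Core.norm_inner_symm X Y, ← sq, mul_comm (RCLike.re _)] at hCS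

theorem stmt_2_general [DecidableEq n] {Φ : Matrix m m 𝕜} {Q : Matrix n n 𝕜}
    (hΦ : Φ.PosSemidef) (hQ : Q.PosDef) (X Y : Matrix m n 𝕜) :
    ‖(Φ * X * Yᴴ).trace‖ ^ 2 ≤
      RCLike.re (Φ * X * Q * Xᴴ).trace * RCLike.re (Φ * Y * Q⁻¹ * Yᴴ).trace := by
  have hcancel : Q * (Y * Q⁻¹)ᴴ = Yᴴ := by
    rw [conjTranspose_mul, hQ.inv.isHermitian.eq,
      mul_nonsing_inv_cancel_left _ _ ((isUnit_iff_isUnit_det Q).mp hQ.isUnit)]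
  have hcross : Φ * X * Q * (Y * Q⁻¹)ᴴ = Φ * X * Yᴴ := by
    rw [Matrix.mul_assoc _ Q, hcancel]
  have hself : Φ * (Y * Q⁻¹) * Q * (Y * Q⁻¹)ᴴ = Φ * Y * Q⁻¹ * Yᴴ := by
    rw [Matrix.mul_assoc _ Q, hcancel, ← Matrix.mul_assoc Φ]
  simpa only [hcross, hself] using
    norm_trace_mul_mul_mul_conjTranspose_sq_le hΦ hQ.posSemidef X (Y * Q⁻¹)

end WeightedTrace

/-- The key bounding step used for the MSE upper bound ξ̄_obj,AF (Eq. (19) of the paper):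
for symmetric PSD `Φ`, symmetric positive-definite `Q`, and diagonal `D` with
`tr(Φ D Q D) > 0`, we have `tr(Φ D Q⁻¹ D) ≥ [tr(Φ D²)]² / tr(Φ D Q D)`. -/
theorem stmt_2 (M : ℕ) (Φ Q D : Matrix (Fin M) (Fin M) ℝ)
    (hΦ : Φ.PosSemidef) (hQ : Q.PosDef) (hD : D.IsDiag)
    (htr : 0 < (Φ * D * Q * D).trace) :
    ((Φ * D * D).trace) ^ 2 / (Φ * D * Q * D).trace ≤ (Φ * D * Q⁻¹ * D).trace := by
  rw [div_le_iff₀' htr]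
  simpa [conjTranspose_eq_transpose_of_trivial, hD.isSymm.eq] using stmt_2_general hΦ hQ D D
end

section
/- Fix an integer N ≥ 1, a probability p ∈ [0,1], and consider the Markov chain on states {0, 1, …, N} with transition probabilities: from each state k with 0 ≤ k ≤ N−1, move to k+1 with probability p and stay at k with probability 1−p; from state N, move to state 1 with probability p and to state 0 with probability 1−p. Then the vector π given by π₀ = (1−p)/N, π_k = 1/N for 1 ≤ k ≤ N−1, and π_N = p/N is a stationary distribution of this chain: its entries are nonnegative, sum to 1, and satisfy πᵀ P = πᵀ where P is the transition matrix. -/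
open Matrix

/-!
Let `r` be the energy left after a possible transmission, so `r = e` if `e < N` and `r = 0` if
`e = N`. The next state is `r` or `r + 1`, so `r` performs a lazy random walk on the cyclic group
`ℤ/N`, which preserves the uniform distribution. A stationary `e` is thus a uniform `r` plus an
independent Bernoulli arrival, and `π = (1 - p) • unif {0, …, N - 1} + p • unif {1, …, N}`.
-/

section RandomMap

variable {K B R S T : Type*}

lemma vecMul_submatrix_of_comp_eq [NonUnitalNonAssocSemiring K] [Fintype R] {σ : R → R}
    (hσ : σ.Bijective) {v : R → K} (hv : v ∘ σ = v) (M : Matrix R S K) :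
    v ᵥ* M.submatrix σ id = v ᵥ* M := by
  ext s
  calc ∑ r, v r * M (σ r) s = ∑ r, v (σ r) * M (σ r) s :=
        Finset.sum_congr rfl fun r _ => congrArg (· * M (σ r) s) (congrFun hv r).symm
    _ = ∑ r, v r * M r s := hσ.sum_comp fun r => v r * M r s

variable [Fintype B] [DecidableEq S]

/-- The transition matrix from `R` to `S` of the random map that equals `f b` with probability
`w b`, as a mixture of the 0-1 matrices of the maps `f b`. -/
def randomMapMatrix [Semiring K] (w : B → K) (f : B → R → S) : Matrix R S K :=
  ∑ b, w b • (1 : Matrix S S K).submatrix (f b) id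

lemma randomMapMatrix_row [Semiring K] (w : B → K) (f : B → R → S) (r : R) :
    randomMapMatrix w f r = ∑ b, w b • Pi.single (f b r) 1 := by
  ext s
  simp [randomMapMatrix, Matrix.sum_apply, Matrix.one_eq_pi_single]

lemma randomMapMatrix_apply [Semiring K] (w : B → K) (f : B → R → S)
    (r : R) (s : S) : randomMapMatrix w f r s = ∑ b, if s = f b r then w b else 0 := by
  simp [randomMapMatrix_row, Pi.single_apply]

lemma randomMapMatrix_mul [Semiring K] [Fintype S] (w : B → K) (f : B → R → S)
    (M : Matrix S T K) : randomMapMatrix w f * M = ∑ b, w b • M.submatrix (f b) id := by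
  simp only [randomMapMatrix, Matrix.sum_mul, Matrix.smul_mul]
  congr! with b
  exact Matrix.one_submatrix_mul (f b) (Equiv.refl S) M

theorem vecMul_randomMapMatrix_vecMul_submatrix [CommSemiring K] [Fintype R] [Fintype S]
    {w : B → K} (hw : ∑ b, w b = 1) {f : B → R → S} {ρ : S → R}
    (hρ : ∀ b, (ρ ∘ f b).Bijective) {v : R → K} (hv : ∀ b, v ∘ ρ ∘ f b = v) :
    v ᵥ* randomMapMatrix w f ᵥ* (randomMapMatrix w f).submatrix ρ id =
      v ᵥ* randomMapMatrix w f := by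
  set Q := randomMapMatrix w f
  calc v ᵥ* Q ᵥ* Q.submatrix ρ id
      = v ᵥ* ∑ b, w b • Q.submatrix (ρ ∘ f b) id := by
        rw [Matrix.vecMul_vecMul, randomMapMatrix_mul]
        simp only [Matrix.submatrix_submatrix, Function.comp_id]
    _ = ∑ b, w b • (v ᵥ* Q.submatrix (ρ ∘ f b) id) := by
        simp only [Matrix.vecMul_sum, Matrix.vecMul_smul]
    _ = ∑ b, w b • (v ᵥ* Q) := by
        simp only [vecMul_submatrix_of_comp_eq (hρ _) (hv _)]
    _ = v ᵥ* Q := by rw [← Finset.sum_smul, hw, one_smul]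

end RandomMap

section Simplex

variable {K B R S : Type*} [Fintype B] [Fintype S]
  [Field K] [LinearOrder K] [IsStrictOrderedRing K]

lemma vecMul_mem_stdSimplex [Fintype R] {v : R → K} (hv : v ∈ stdSimplex K R) {M : Matrix R S K}
    (hM : ∀ r, M r ∈ stdSimplex K S) : v ᵥ* M ∈ stdSimplex K S := by
  rw [Matrix.vecMul_eq_sum]
  exact (convex_stdSimplex K S).sum_mem (fun r _ => hv.1 r) hv.2 fun r _ => hM r

lemma randomMapMatrix_row_mem_stdSimplex [DecidableEq S] {w : B → K}
    (hw : w ∈ stdSimplex K B) (f : B → R → S) (r : R) :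
    randomMapMatrix w f r ∈ stdSimplex K S := by
  rw [randomMapMatrix_row]
  exact (convex_stdSimplex K S).sum_mem (fun b _ => hw.1 b) hw.2
    fun b _ => single_mem_stdSimplex K (f b r)

end Simplex

section EnergyChain

variable {K : Type*} {N : ℕ}

/-- The energy at the end of a slot that starts with residual energy `r`, without (index `0`) and
with (index `1`) an arrival. -/
def harvest : Fin 2 → Fin N → Fin (N + 1) :=
  ![Fin.castSucc, Fin.succ]

/-- The energy left once a full battery has been depleted by a transmission: reduction modulo `N`
fixes every state below `N` and sends the threshold `N` to `0`. -/
def residualEnergy [NeZero N] (i : Fin (N + 1)) : Fin N :=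
  Fin.ofNat N i

lemma residualEnergy_castSucc [NeZero N] (r : Fin N) : residualEnergy r.castSucc = r :=
  Fin.ofNat_val_eq_self r

lemma residualEnergy_succ [NeZero N] (r : Fin N) : residualEnergy r.succ = r + 1 := by
  ext
  simp [residualEnergy, Fin.val_add]

lemma residualEnergy_last [NeZero N] : residualEnergy (Fin.last N) = 0 :=
  Fin.ofNat_self

lemma residualEnergy_comp_harvest_bijective [NeZero N] :
    ∀ b, (residualEnergy ∘ harvest (N := N) b).Bijective := by
  have no_arrival : residualEnergy ∘ harvest (N := N) 0 = id := funext residualEnergy_castSucc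
  have arrival : residualEnergy ∘ harvest (N := N) 1 = Equiv.addRight 1 :=
    funext residualEnergy_succ
  rw [Fin.forall_fin_two, no_arrival, arrival]
  exact ⟨Function.bijective_id, Equiv.bijective _⟩

/-- The transition matrix of the accumulated energy: transmit if the threshold is reached, then
harvest a Bernoulli arrival. -/
def energyTransition [Ring K] [NeZero N] (p : K) : Matrix (Fin (N + 1)) (Fin (N + 1)) K :=
  (randomMapMatrix ![1 - p, p] harvest).submatrix residualEnergy id

lemma randomMapMatrix_harvest_apply [Ring K] (p : K) (r : Fin N) (j : Fin (N + 1)) :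
    randomMapMatrix ![1 - p, p] harvest r j =
      (if j = r.castSucc then 1 - p else 0) + if j = r.succ then p else 0 := by
  rw [randomMapMatrix_apply, Fin.sum_univ_two]
  rfl

lemma energyTransition_apply [Ring K] [NeZero N] (p : K) (i j : Fin (N + 1)) :
    energyTransition p i j =
      if i.val < N then
        (if j.val = i.val + 1 then p else if j = i then 1 - p else 0)
      else
        (if j.val = 1 then p else if j.val = 0 then 1 - p else 0) := by
  rw [energyTransition, Matrix.submatrix_apply, randomMapMatrix_harvest_apply]
  cases i using Fin.lastCases with
  | last =>
    simp only [residualEnergy_last, Fin.ext_iff, Fin.val_castSucc, Fin.val_succ, Fin.val_zero,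
      Fin.val_last]
    grind
  | cast r =>
    simp only [residualEnergy_castSucc, Fin.ext_iff, Fin.val_castSucc, Fin.val_succ]
    grind

lemma sum_ite_eq_castSucc [AddCommMonoid K] (c : K) (j : Fin (N + 1)) :
    (∑ r : Fin N, if j = r.castSucc then c else 0) = if j = Fin.last N then 0 else c := by
  cases j using Fin.lastCases <;> simp [Fin.castSucc_ne_last, (Fin.castSucc_ne_last _).symm]

lemma sum_ite_eq_succ [AddCommMonoid K] (c : K) (j : Fin (N + 1)) :
    (∑ r : Fin N, if j = r.succ then c else 0) = if j = 0 then 0 else c := by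
  cases j using Fin.cases <;> simp [(Fin.succ_ne_zero _).symm]

lemma const_vecMul_randomMapMatrix_harvest [Ring K] (p c : K) (j : Fin (N + 1)) :
    ((fun _ => c) ᵥ* randomMapMatrix ![1 - p, p] harvest) j =
      c * ((if j = Fin.last N then 0 else 1 - p) + if j = 0 then 0 else p) := by
  simp only [Matrix.vecMul, dotProduct, randomMapMatrix_harvest_apply, ← Finset.mul_sum,
    Finset.sum_add_distrib, sum_ite_eq_castSucc, sum_ite_eq_succ]

lemma barycenter_vecMul_randomMapMatrix_harvest [Field K] [LinearOrder K]
    [IsStrictOrderedRing K] [NeZero N] (p : K) (j : Fin (N + 1)) :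
    ((stdSimplex.barycenter : stdSimplex K (Fin N)).1 ᵥ* randomMapMatrix ![1 - p, p] harvest) j =
      if j.val = 0 then (1 - p) / N
      else if j.val = N then p / N
      else 1 / N := by
  have hN : N ≠ 0 := NeZero.ne N
  refine (const_vecMul_randomMapMatrix_harvest p _ j).trans ?_
  simp only [Fintype.card_fin, Fin.ext_iff, Fin.val_last, Fin.val_zero]
  grind

end EnergyChain

theorem stmt_6_general {K : Type*} [Field K] [LinearOrder K] [IsStrictOrderedRing K]
    (N : ℕ) (hN : 1 ≤ N) (p : K) (hp : p ∈ Set.Icc (0 : K) 1)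
    (P : Matrix (Fin (N + 1)) (Fin (N + 1)) K)
    (hP : ∀ i j : Fin (N + 1), P i j =
      if i.val < N then
        (if j.val = i.val + 1 then p else if j = i then 1 - p else 0)
      else
        (if j.val = 1 then p else if j.val = 0 then 1 - p else 0))
    (π : Fin (N + 1) → K)
    (hπ : ∀ i : Fin (N + 1), π i =
      if i.val = 0 then (1 - p) / N
      else if i.val = N then p / N
      else 1 / N) :
    (∀ i, 0 ≤ π i) ∧ (∑ i, π i = 1) ∧ Matrix.vecMul π P = π := by
  have : NeZero N := ⟨Nat.one_le_iff_ne_zero.1 hN⟩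
  let u : stdSimplex K (Fin N) := stdSimplex.barycenter
  let w : stdSimplex K (Fin 2) := (stdSimplexEquivIcc K).symm ⟨p, hp⟩
  obtain rfl : P = energyTransition p :=
    Matrix.ext fun i j => (hP i j).trans (energyTransition_apply p i j).symm
  obtain rfl : π = u.1 ᵥ* randomMapMatrix w.1 harvest :=
    funext fun j => (hπ j).trans (barycenter_vecMul_randomMapMatrix_harvest p j).symm
  rw [← and_assoc]
  exact ⟨vecMul_mem_stdSimplex u.2 (randomMapMatrix_row_mem_stdSimplex w.2 harvest),
    vecMul_randomMapMatrix_vecMul_submatrix w.2.2 residualEnergy_comp_harvest_bijective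
      fun _ => rfl⟩

/-- Section III-A of the paper (Fig. 3): the stationary distribution of the
accumulated-energy Markov chain under Bernoulli energy arrivals.
States are `0, 1, …, N`; from each state `k < N` the chain moves to `k+1`
with probability `p` and stays at `k` with probability `1−p`; from state `N`
it moves to `1` with probability `p` and to `0` with probability `1−p`.
The vector `π` with `π₀ = (1−p)/N`, `π_k = 1/N` for `1 ≤ k ≤ N−1`, `π_N = p/N`
is a stationary distribution. -/
theorem stmt_6 (N : ℕ) (hN : 1 ≤ N) (p : ℝ) (hp : p ∈ Set.Icc (0 : ℝ) 1)
    (P : Matrix (Fin (N + 1)) (Fin (N + 1)) ℝ)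
    (hP : ∀ i j : Fin (N + 1), P i j =
      if i.val < N then
        (if j.val = i.val + 1 then p else if j = i then 1 - p else 0)
      else
        (if j.val = 1 then p else if j.val = 0 then 1 - p else 0))
    (π : Fin (N + 1) → ℝ)
    (hπ : ∀ i : Fin (N + 1), π i =
      if i.val = 0 then (1 - p) / N
      else if i.val = N then p / N
      else 1 / N) :
    (∀ i, 0 ≤ π i) ∧ (∑ i, π i = 1) ∧ Matrix.vecMul π P = π :=
  stmt_6_general N hN p hp P hP π hπ
end
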